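/- In the setting of the constructed dictionary D ∈ R^{d×N} (columns d_i = (e_i; 0) for i ≤ m and d_i = (√μ̃·ē; √(1−μ̃)·r_i) for i > m, with 0 < μ < 1/(m−1), ⟨e_i,e_j⟩ = 1 if i=j and −μ otherwise, ē the normalized sum of the e_i, μ̃ = μ²m/(1−(m−1)μ), r_i unit vectors in R^{d−m}), with x = ν·Σ_{j=1}^m ê_j for ν > 0, σ > 0, w = (w_m; w_{d̃}) ∈ R^d, Ω = {1,…,m}, and y = Dx + σw, one has max_{i∉Ω} |⟨d_i, y⟩| ≥ νmμ − σ√μ̃·|⟨ē, w_m⟩| + σ√(1−μ̃)·max_{i∉Ω} ⟨r_i, w_{d̃}⟩. -/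

import Mathlib

open Real

noncomputable section

/-- Euclidean dot product on `ℝ^n`. -/
def dot {n : ℕ} (u v : Fin n → ℝ) : ℝ := ∑ i, u i * v i

/-- Dot product on `ℝ^m × ℝ^k`, decomposing coordinatewise. -/
def pdot {m k : ℕ} (u v : (Fin m → ℝ) × (Fin k → ℝ)) : ℝ :=
  dot u.1 v.1 + dot u.2 v.2

/-- The normalized sum `ē = (∑ e_i) / ‖∑ e_i‖`. -/
def ebar {m : ℕ} (e : Fin m → Fin m → ℝ) : Fin m → ℝ :=
  (Real.sqrt (dot (∑ i, e i) (∑ i, e i)))⁻¹ • ∑ i, e i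

/-- The columns of the dictionary constructed in the proof of the near-tightness
theorem: `d_i = (e_i; 0)` for `i < m` and `d_i = (√μ̃ ē; √(1-μ̃) r_i)` for `i ≥ m`,
where `μ̃ = μ²m/(1-(m-1)μ)`. -/
def Dcol (m d N : ℕ) (μ : ℝ) (e : Fin m → Fin m → ℝ)
    (r : Fin N → Fin (d - m) → ℝ) (i : Fin N) : (Fin m → ℝ) × (Fin (d - m) → ℝ) :=
  if h : (i : ℕ) < m then (e ⟨i, h⟩, 0)
  else (Real.sqrt (μ ^ 2 * m / (1 - ((m : ℝ) - 1) * μ)) • ebar e,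
        Real.sqrt (1 - μ ^ 2 * m / (1 - ((m : ℝ) - 1) * μ)) • r i)

theorem dot_add_r {n : ℕ} (u v w : Fin n → ℝ) : dot u (v + w) = dot u v + dot u w := by
  simp [dot, mul_add, Finset.sum_add_distrib]

theorem dot_smul_r {n : ℕ} (a : ℝ) (u v : Fin n → ℝ) : dot u (a • v) = a * dot u v := by
  simp only [dot, Finset.mul_sum, Pi.smul_apply, smul_eq_mul]
  exact Finset.sum_congr rfl fun _ _ => by ring

theorem dot_smul_l {n : ℕ} (a : ℝ) (u v : Fin n → ℝ) : dot (a • u) v = a * dot u v := by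
  simp only [dot, Finset.mul_sum, Pi.smul_apply, smul_eq_mul]
  exact Finset.sum_congr rfl fun _ _ => by ring

theorem dot_sum_sum {n m : ℕ} (e : Fin m → Fin n → ℝ) :
    dot (∑ i, e i) (∑ i, e i) = ∑ i, ∑ j, dot (e i) (e j) := by
  simp only [dot, Finset.sum_apply, Finset.sum_mul_sum]
  rw [Finset.sum_comm]
  refine Finset.sum_congr rfl fun i _ => ?_
  rw [Finset.sum_comm]

theorem dot_S {m : ℕ} (μ : ℝ) (e : Fin m → Fin m → ℝ)
    (he : ∀ i j : Fin m, dot (e i) (e j) = if i = j then (1 : ℝ) else -μ) :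
    dot (∑ i, e i) (∑ i, e i) = m * (1 - ((m : ℝ) - 1) * μ) := by
  rw [dot_sum_sum]
  have h : ∀ i j : Fin m, dot (e i) (e j) = (if i = j then (1 + μ) else 0) + -μ := by
    intro i j
    rw [he]
    split_ifs <;> ring
  simp only [h, Finset.sum_add_distrib, Finset.sum_ite_eq, Finset.mem_univ, if_true,
    Finset.sum_const, Finset.card_univ, Fintype.card_fin, nsmul_eq_mul]
  ring

theorem sum_Dcol (m d N : ℕ) (hmN : m ≤ N) (μ ν : ℝ) (e : Fin m → Fin m → ℝ)
    (r : Fin N → Fin (d - m) → ℝ) :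
    (∑ j : Fin N, (if (j : ℕ) < m then ν else 0) • Dcol m d N μ e r j)
      = (ν • ∑ i, e i, 0) := by
  obtain ⟨k, rfl⟩ := Nat.exists_eq_add_of_le hmN
  rw [Fin.sum_univ_add]
  have h1 : ∀ i : Fin m, (if ((Fin.castAdd k i : Fin (m + k)) : ℕ) < m then ν else 0) •
      Dcol m d (m + k) μ e r (Fin.castAdd k i) = (ν • e i, 0) := by
    intro i
    simp [Dcol]
  have h2 : ∀ i : Fin k, (if ((Fin.natAdd m i : Fin (m + k)) : ℕ) < m then ν else 0) •
      Dcol m d (m + k) μ e r (Fin.natAdd m i) = 0 := by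
    intro i
    simp
  simp only [h1, h2, Finset.sum_const_zero, add_zero]
  ext : 1
  · simp [Prod.fst_sum, Finset.smul_sum]
  · simp [Prod.snd_sum]

/-- Lemma (lower bound for the maximal correlation with non-support atoms): for the
constructed dictionary, `x = ν Σ_{j<m} ê_j`, `w = (w_m; w_{d̃})` and `y = Dx + σw`,
`max_{i∉Ω} |⟨d_i, y⟩| ≥ νmμ - σ√μ̃ |⟨ē, w_m⟩| + σ√(1-μ̃) max_{i∉Ω} ⟨r_i, w_{d̃}⟩`. -/
theorem nonsupport_max_lower_bound
    (m d N : ℕ) (hm : 2 ≤ m) (hmd : m < d) (hdN : d < N)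
    (μ : ℝ) (hμ0 : 0 < μ) (hμ1 : μ < 1 / ((m : ℝ) - 1))
    (e : Fin m → Fin m → ℝ)
    (he : ∀ i j : Fin m, dot (e i) (e j) = if i = j then (1 : ℝ) else -μ)
    (r : Fin N → Fin (d - m) → ℝ)
    (hr_unit : ∀ i : Fin N, m ≤ (i : ℕ) → dot (r i) (r i) = 1)
    (ν σ : ℝ) (hν : 0 < ν) (hσ : 0 < σ)
    (w : (Fin m → ℝ) × (Fin (d - m) → ℝ)) :
    ν * m * μ -
        σ * Real.sqrt (μ ^ 2 * m / (1 - ((m : ℝ) - 1) * μ)) * |dot (ebar e) w.1| +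
        σ * Real.sqrt (1 - μ ^ 2 * m / (1 - ((m : ℝ) - 1) * μ)) *
          ((Finset.univ.filter fun i : Fin N => m ≤ (i : ℕ)).sup'
            ⟨⟨m, by omega⟩, by simp⟩ fun i => dot (r i) w.2) ≤
      (Finset.univ.filter fun i : Fin N => m ≤ (i : ℕ)).sup'
        ⟨⟨m, by omega⟩, by simp⟩ fun i =>
          |pdot (Dcol m d N μ e r i)
            ((∑ j : Fin N, (if (j : ℕ) < m then ν else 0) • Dcol m d N μ e r j) + σ • w)| := by
  have hm' : (2 : ℝ) ≤ m := by exact_mod_cast hm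
  have hc : 0 < 1 - ((m : ℝ) - 1) * μ := by
    rw [lt_div_iff₀ (by linarith)] at hμ1
    linarith
  have hS := dot_S μ e he
  have hmain : Real.sqrt (μ ^ 2 * m / (1 - ((m : ℝ) - 1) * μ)) *
      dot (ebar e) (ν • ∑ i, e i) = ν * m * μ := by
    rw [ebar, dot_smul_l, dot_smul_r, hS]
    generalize 1 - ((m : ℝ) - 1) * μ = c at hc
    have hm0 : (0 : ℝ) < m := by linarith
    have h1 : Real.sqrt (μ ^ 2 * m / c) = μ / c * Real.sqrt (m * c) := by
      rw [Real.sqrt_eq_iff_mul_self_eq (by positivity) (by positivity)]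
      have := Real.mul_self_sqrt (show 0 ≤ m * c by positivity)
      symm
      calc μ / c * √(m * c) * (μ / c * √(m * c))
          = (μ / c) ^ 2 * (√(m * c) * √(m * c)) := by ring
        _ = μ ^ 2 * m / c := by rw [this]; field_simp
    have h2 : Real.sqrt (m * c) ≠ 0 := (Real.sqrt_pos.mpr (by positivity)).ne'
    rw [h1]
    field_simp
  rw [sum_Dcol m d N (by omega)]
  obtain ⟨i, hi, hsup⟩ := Finset.exists_mem_eq_sup'
    (s := Finset.univ.filter fun i : Fin N => m ≤ (i : ℕ))
    ⟨⟨m, by omega⟩, by simp⟩ (fun i => dot (r i) w.2)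
  rw [hsup]
  refine le_trans ?_ (Finset.le_sup' _ hi)
  have him : ¬ (i : ℕ) < m := by simpa using hi
  refine le_trans ?_ (le_abs_self _)
  rw [Dcol, dif_neg him]
  simp only [pdot, Prod.fst_add, Prod.snd_add, Prod.smul_fst, Prod.smul_snd, zero_add]
  rw [dot_smul_l, dot_add_r, mul_add, hmain, dot_smul_l, dot_smul_r, dot_smul_r]
  have h3 := mul_le_mul_of_nonneg_left (neg_abs_le (dot (ebar e) w.1))
    (mul_nonneg hσ.le (Real.sqrt_nonneg (μ ^ 2 * m / (1 - ((m : ℝ) - 1) * μ))))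
  linarith

end
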